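/- Let $R_1$ and $R_2$ be two sorted lists with $|R_1| \leq |R_2|$ and $|R_1| + |R_2| = n$ odd, and let $x$ and $y$ be their respective middle elements with $x \leq y$. Then every element in the first half of $R_1$ (the $\lfloor |R_1|/2 \rfloor$ smallest elements of $R_1$) has rank strictly below the median of $R_1 \cup R_2$, and every element in the last half of $R_2$ has rank strictly above the median; removing $\lfloor |R_1|/2 \rfloor$ elements from the low end of $R_1$ and $\lfloor |R_1|/2 \rfloor$ from the high end of $R_2$ preserves the median. -/

import Mathlib

/-! The median of a finite set `S` of odd size `2k + 1` is the unique element of `S` with exactly `k`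
elements of `S` below it (`medianOf_spec`, `medianOf_eq`), hence also exactly `k` above it.

Write `m = ⌊n₁/2⌋` and `n₁ + n₂ = 2k + 1`. An element of the first half of `R₁` lies below
`x = r1 m` and all later entries of `R₁`, and, since `x ≤ y`, below `y` and all later entries of
`R₂`: these are at least `⌈n₁/2⌉ + ⌈n₂/2⌉ = k + 1` elements, so it is strictly below the median.
Parity forces `n₁ < n₂`, so an entry of `R₂` of index at least `n₂ - m` comes after `y`; it lies
above the `⌊n₂/2⌋ + 1` entries of `R₂` up to `y` and the `m + 1` entries of `R₁` up to `x`, which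
is again more than `k` elements, so it is strictly above the median.
Trimming therefore removes `m` elements from each side of the median, and the median still has
as many remaining elements below it as above it. -/

/-- The median of a finite set of reals of odd size: the middle element of its
sorted enumeration. -/
noncomputable def medianOf (S : Finset ℝ) : ℝ :=
  (S.sort (· ≤ ·)).getD ((S.card - 1) / 2) 0

/-- The median of a nonempty set belongs to it and has the expected number of elements below it. -/
lemma medianOf_spec (S : Finset ℝ) (hS : S.Nonempty) :
    medianOf S ∈ S ∧ (S.filter (· < medianOf S)).card = (S.card - 1) / 2 := by
  have hk : (S.card - 1) / 2 < S.card := by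
    have := hS.card_pos
    omega
  set k : Fin S.card := ⟨(S.card - 1) / 2, hk⟩ with hkdef
  have hM : medianOf S = S.orderEmbOfFin rfl k := by
    unfold medianOf
    rw [List.getD_eq_getElem _ _ (by simpa using hk), Finset.orderEmbOfFin_apply]
    rfl
  have hf : S.filter (· < medianOf S) = (Finset.Iio k).map (S.orderEmbOfFin rfl).toEmbedding := by
    ext a
    simp only [Finset.mem_filter, Finset.mem_map, Finset.mem_Iio, hM]
    constructor
    · rintro ⟨ha, hlt⟩
      have : a ∈ Set.range (S.orderEmbOfFin rfl) := by simpa using ha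
      obtain ⟨j, rfl⟩ := this
      exact ⟨j, by simpa using hlt, rfl⟩
    · rintro ⟨j, hj, rfl⟩
      exact ⟨S.orderEmbOfFin_mem rfl j, by simpa using hj⟩
  refine ⟨hM ▸ S.orderEmbOfFin_mem rfl k, ?_⟩
  rw [hf, Finset.card_map, Fin.card_Iio]

/-- Within a finite set, the number of smaller elements is strictly monotone. -/
lemma card_filter_lt_strictMono {S : Finset ℝ} {a b : ℝ} (ha : a ∈ S) (hab : a < b) :
    (S.filter (· < a)).card < (S.filter (· < b)).card := by
  apply Finset.card_lt_card
  refine (Finset.ssubset_iff_of_subset ?_).2 ⟨a, by simp [ha, hab], by simp⟩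
  intro c hc
  simp only [Finset.mem_filter] at hc ⊢
  exact ⟨hc.1, hc.2.trans hab⟩

/-- The median is determined by membership and the number of elements below it. -/
lemma medianOf_eq {S : Finset ℝ} {a : ℝ} (ha : a ∈ S)
    (hc : (S.filter (· < a)).card = (S.card - 1) / 2) : medianOf S = a := by
  obtain ⟨hm, hmc⟩ := medianOf_spec S ⟨a, ha⟩
  rcases lt_trichotomy (medianOf S) a with h | h | h
  · have := card_filter_lt_strictMono hm h
    omega
  · exact h
  · have := card_filter_lt_strictMono ha h
    omega

/-- An element with more than half of `S` above it is below the median. -/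
lemma lt_medianOf {S A : Finset ℝ} {a : ℝ} (hS : S.Nonempty) (hA : A ⊆ S) (hlt : ∀ b ∈ A, a < b)
    (hc : S.card < (S.card - 1) / 2 + 1 + A.card) : a < medianOf S := by
  obtain ⟨hm, hmc⟩ := medianOf_spec S hS
  by_contra! h
  have hdis : Disjoint (insert (medianOf S) (S.filter (· < medianOf S))) A := by
    rw [Finset.disjoint_left]
    intro b hb hbA
    have := hlt b hbA
    rcases Finset.mem_insert.1 hb with rfl | hb
    · linarith
    · have := (Finset.mem_filter.1 hb).2
      linarith
  have hsub : insert (medianOf S) (S.filter (· < medianOf S)) ∪ A ⊆ S :=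
    Finset.union_subset (Finset.insert_subset hm (Finset.filter_subset _ _)) hA
  have := Finset.card_le_card hsub
  rw [Finset.card_union_of_disjoint hdis, Finset.card_insert_of_notMem (by simp)] at this
  omega

/-- An element with more than `(|S| - 1) / 2` elements of `S` below it is above the median. -/
lemma medianOf_lt {S A : Finset ℝ} {a : ℝ} (hS : S.Nonempty) (hA : A ⊆ S) (hlt : ∀ b ∈ A, b < a)
    (hc : (S.card - 1) / 2 < A.card) : medianOf S < a := by
  obtain ⟨-, hmc⟩ := medianOf_spec S hS
  by_contra! h
  have : A ⊆ S.filter (· < medianOf S) := fun b hb =>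
    Finset.mem_filter.2 ⟨hA hb, (hlt b hb).trans_le h⟩
  have := Finset.card_le_card this
  omega

/-- In a set of odd size, removing equally many elements strictly below and strictly above the median
preserves it. -/
lemma medianOf_sdiff {S L H : Finset ℝ} (hS : Odd S.card) (hL : L ⊆ S) (hH : H ⊆ S)
    (hLt : ∀ b ∈ L, b < medianOf S) (hHt : ∀ b ∈ H, medianOf S < b) (hc : L.card = H.card) :
    medianOf (S \ (L ∪ H)) = medianOf S := by
  obtain ⟨hm, hmc⟩ := medianOf_spec S (Finset.card_pos.1 hS.pos)
  have hdis : Disjoint L H := Finset.disjoint_left.2 fun b hb hb' =>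
    lt_asymm (hLt b hb) (hHt b hb')
  apply medianOf_eq
  · simp only [Finset.mem_sdiff, Finset.mem_union, not_or]
    exact ⟨hm, fun h => lt_irrefl _ (hLt _ h), fun h => lt_irrefl _ (hHt _ h)⟩
  · have hf : (S \ (L ∪ H)).filter (· < medianOf S) = S.filter (· < medianOf S) \ L := by
      ext b
      simp only [Finset.mem_filter, Finset.mem_sdiff, Finset.mem_union, not_or]
      constructor
      · rintro ⟨⟨h1, h2, -⟩, h4⟩
        exact ⟨⟨h1, h4⟩, h2⟩
      · rintro ⟨⟨h1, h4⟩, h2⟩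
        exact ⟨⟨h1, h2, fun h => lt_asymm h4 (hHt b h)⟩, h4⟩
    have hLf : L ⊆ S.filter (· < medianOf S) := fun b hb =>
      Finset.mem_filter.2 ⟨hL hb, hLt b hb⟩
    rw [hf, Finset.card_sdiff_of_subset hLf, hmc,
      Finset.card_sdiff_of_subset (Finset.union_subset hL hH),
      Finset.card_union_of_disjoint hdis]
    obtain ⟨k, hk⟩ := hS
    omega

/-- Let `R₁`, `R₂` be sorted lists (strictly increasing
enumerations `r1`, `r2`) with `|R₁| ≤ |R₂|`, `|R₁| + |R₂|` odd, all elements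
distinct, and suppose the middle elements satisfy `x = r1(⌊n₁/2⌋) ≤
y = r2(⌊n₂/2⌋)`.  Then every element of the first half of `R₁` is strictly
below the median of `R₁ ∪ R₂`, every element of the last half of `R₂` is
strictly above it, and removing the low `⌊n₁/2⌋` elements of `R₁` and the high
`⌊n₁/2⌋` elements of `R₂` preserves the median. -/
theorem two_runs_median_trimming (n₁ n₂ : ℕ) (h1 : 1 ≤ n₁) (h12 : n₁ ≤ n₂)
    (hodd : Odd (n₁ + n₂))
    (r1 : Fin n₁ → ℝ) (r2 : Fin n₂ → ℝ)
    (hr1 : StrictMono r1) (hr2 : StrictMono r2)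
    (hdisj : ∀ i j, r1 i ≠ r2 j)
    (hxy : r1 ⟨n₁ / 2, by omega⟩ ≤ r2 ⟨n₂ / 2, by omega⟩) :
    let S : Finset ℝ := Finset.univ.image r1 ∪ Finset.univ.image r2
    let D : Finset ℝ :=
      (Finset.univ.filter fun i : Fin n₁ => (i : ℕ) < n₁ / 2).image r1 ∪
      (Finset.univ.filter fun j : Fin n₂ => n₂ - n₁ / 2 ≤ (j : ℕ)).image r2
    (∀ i : Fin n₁, (i : ℕ) < n₁ / 2 → r1 i < medianOf S) ∧
    (∀ j : Fin n₂, n₂ - n₁ / 2 ≤ (j : ℕ) → medianOf S < r2 j) ∧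
    medianOf (S \ D) = medianOf S := by
  intro S D
  have hcard : ∀ (A : Finset (Fin n₁)) (B : Finset (Fin n₂)),
      (A.image r1 ∪ B.image r2).card = A.card + B.card := by
    intro A B
    rw [Finset.card_union_of_disjoint, Finset.card_image_of_injective _ hr1.injective,
      Finset.card_image_of_injective _ hr2.injective]
    rw [Finset.disjoint_left]
    intro a ha hb
    obtain ⟨i, -, rfl⟩ := Finset.mem_image.1 ha
    obtain ⟨j, -, hj⟩ := Finset.mem_image.1 hb
    exact hdisj i j hj.symm
  have hsub : ∀ (A : Finset (Fin n₁)) (B : Finset (Fin n₂)), A.image r1 ∪ B.image r2 ⊆ S :=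
    fun A B => Finset.union_subset_union (Finset.image_subset_image (Finset.subset_univ _))
      (Finset.image_subset_image (Finset.subset_univ _))
  have hScard : S.card = n₁ + n₂ := by simpa using hcard Finset.univ Finset.univ
  have hSne : S.Nonempty := Finset.card_pos.1 (by omega)
  obtain ⟨k, hk⟩ := hodd
  have hlow : ∀ i : Fin n₁, (i : ℕ) < n₁ / 2 → r1 i < medianOf S := by
    intro i hi
    refine lt_medianOf hSne
      (hsub (Finset.Ici ⟨n₁ / 2, by omega⟩) (Finset.Ici ⟨n₂ / 2, by omega⟩)) ?_ ?_
    · have hx : r1 i < r1 ⟨n₁ / 2, by omega⟩ := hr1 hi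
      intro b hb
      rcases Finset.mem_union.1 hb with hb | hb
      · obtain ⟨j, hj, rfl⟩ := Finset.mem_image.1 hb
        exact hx.trans_le (hr1.monotone (Finset.mem_Ici.1 hj))
      · obtain ⟨j, hj, rfl⟩ := Finset.mem_image.1 hb
        exact (hx.trans_le hxy).trans_le (hr2.monotone (Finset.mem_Ici.1 hj))
    · rw [hScard, hcard, Fin.card_Ici, Fin.card_Ici]
      dsimp only
      omega
  have hhigh : ∀ j : Fin n₂, n₂ - n₁ / 2 ≤ (j : ℕ) → medianOf S < r2 j := by
    intro j hj
    refine medianOf_lt hSne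
      (hsub (Finset.Iic ⟨n₁ / 2, by omega⟩) (Finset.Iic ⟨n₂ / 2, by omega⟩)) ?_ ?_
    · -- `n₁ < n₂` by parity, so `j` lies strictly beyond the middle index of `R₂`
      have hy : r2 ⟨n₂ / 2, by omega⟩ < r2 j := hr2 (Fin.lt_def.2 (by dsimp only; omega))
      intro b hb
      rcases Finset.mem_union.1 hb with hb | hb
      · obtain ⟨i, hi, rfl⟩ := Finset.mem_image.1 hb
        exact ((hr1.monotone (Finset.mem_Iic.1 hi)).trans hxy).trans_lt hy
      · obtain ⟨i, hi, rfl⟩ := Finset.mem_image.1 hb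
        exact (hr2.monotone (Finset.mem_Iic.1 hi)).trans_lt hy
    · rw [hScard, hcard, Fin.card_Iic, Fin.card_Iic]
      dsimp only
      omega
  refine ⟨hlow, hhigh, medianOf_sdiff (hScard ▸ ⟨k, hk⟩) ?_ ?_ ?_ ?_ ?_⟩
  · exact Finset.subset_union_left.trans (hsub _ ∅)
  · exact Finset.subset_union_right.trans (hsub ∅ _)
  · intro b hb
    obtain ⟨i, hi, rfl⟩ := Finset.mem_image.1 hb
    exact hlow i (Finset.mem_filter.1 hi).2
  · intro b hb
    obtain ⟨j, hj, rfl⟩ := Finset.mem_image.1 hb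
    exact hhigh j (Finset.mem_filter.1 hj).2
  · rw [Finset.card_image_of_injective _ hr1.injective,
      Finset.card_image_of_injective _ hr2.injective]
    have e1 : (Finset.univ.filter fun i : Fin n₁ => (i : ℕ) < n₁ / 2) =
        Finset.Iio ⟨n₁ / 2, by omega⟩ := by
      ext i
      simp [Fin.lt_def]
    have e2 : (Finset.univ.filter fun j : Fin n₂ => n₂ - n₁ / 2 ≤ (j : ℕ)).card = n₁ / 2 := by
      -- the complement is an initial segment of length `n₂ - n₁ / 2`
      have hc := Finset.card_filter_add_card_filter_not (s := (Finset.univ : Finset (Fin n₂)))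
        (fun j : Fin n₂ => n₂ - n₁ / 2 ≤ (j : ℕ))
      have hlt := Fin.card_filter_val_lt (n := n₂) (m := n₂ - n₁ / 2)
      simp only [not_le, Finset.card_univ, Fintype.card_fin] at hc
      omega
    rw [e1, e2, Fin.card_Iio]
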